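/- arXiv:2106.01460 — 2 statements merged into one kernel-verified Lean document; each statement's English description precedes it below -/
import Mathlib

section
/- Let D_1 = D(x_1, a_1) = −Σ_{i=1}^{p−1} (C(p,i)/p)·x_1^i·a_1^{p−i} ∈ K_1. Then v_1(D_1) = −(p^2 − p + 1)·b_1, where b_1 = −v_0(a_1). -/
/-- A normalized discrete valuation on a field `K`, recorded as a function
`v : K → ℤ`.  The value of `v` at `0` is irrelevant: all conditions below only
refer to nonzero elements (the convention `v 0 = ∞` being understood). -/
structure IsDiscVal {K : Type*} [Field K] (v : K → ℤ) : Prop where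
  map_one : v 1 = 0
  map_mul : ∀ x y : K, x ≠ 0 → y ≠ 0 → v (x * y) = v x + v y
  min_le_add : ∀ x y : K, x ≠ 0 → y ≠ 0 → x + y ≠ 0 → min (v x) (v y) ≤ v (x + y)
  exists_uniformizer : ∃ π : K, π ≠ 0 ∧ v π = 1

/-!
Let `γ = |x₁|`. Since `|a₁| > 1`, the Artin–Schreier equation forces `|a₁| = γ ^ p`, so that
`|x₁| < |a₁|`. The coefficients `C(p,i)/p` are integers, hence of absolute value at most `1`, and
the one with `i = 1` equals `1`. Trading a factor `a₁` for `x₁` makes a monomial strictly smaller,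
so the monomial `x₁ a₁ ^ (p - 1)` dominates the sum, whose absolute value is therefore
`γ · γ ^ (p (p - 1)) = γ ^ (p ^ 2 - p + 1)`.
-/

namespace IsDiscVal

open WithZero

variable {K : Type*} [Field K] {v : K → ℤ}

open Classical in
/-- The multiplicative valuation `x ↦ exp (-v x)` attached to a discrete valuation `v`, which makes
the API of `Valuation` available. The value at `0` is set to `0`, whatever `v 0` is. -/
noncomputable def toValuation (hv : IsDiscVal v) : Valuation K ℤᵐ⁰ where
  toFun x := if x = 0 then 0 else exp (-v x)
  map_zero' := if_pos rfl
  map_one' := by simp [hv.map_one]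
  map_mul' x y := by
    by_cases hx : x = 0
    · simp [hx]
    by_cases hy : y = 0
    · simp [hy]
    simp only [mul_eq_zero, hx, hy, or_self, if_false, hv.map_mul x y hx hy, neg_add, exp_add]
  map_add_le_max' x y := by
    by_cases hx : x = 0
    · simp [hx]
    by_cases hy : y = 0
    · simp [hy]
    by_cases hxy : x + y = 0
    · simp [hxy]
    simpa only [hx, hy, hxy, if_false, le_max_iff, exp_le_exp, neg_le_neg_iff, min_le_iff]
      using hv.min_le_add x y hx hy hxy

lemma toValuation_of_ne_zero (hv : IsDiscVal v) {x : K} (hx : x ≠ 0) :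
    hv.toValuation x = exp (-v x) :=
  if_neg hx

lemma toValuation_eq_exp_zpow_iff (hv : IsDiscVal v) {x : K} {k b : ℤ} :
    hv.toValuation x = exp b ^ k ↔ x ≠ 0 ∧ v x = -(k * b) := by
  rw [← exp_zsmul, smul_eq_mul]
  by_cases hx : x = 0
  · simp only [hx, map_zero, exp_ne_zero.symm, ne_eq, not_true_eq_false, false_and]
  · rw [hv.toValuation_of_ne_zero hx, exp_inj, neg_eq_iff_eq_neg, and_iff_right hx]

end IsDiscVal

lemma pow_mul_pow_sub_lt_pow_mul_pow_sub {M₀ : Type*} [MonoidWithZero M₀] [PartialOrder M₀]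
    [PosMulStrictMono M₀] [MulPosStrictMono M₀] [ZeroLEOneClass M₀] [NeZero (1 : M₀)] {g h : M₀}
    (hg : 0 < g) (hgh : g < h) {m i n : ℕ} (hmi : m < i) (hin : i ≤ n) :
    g ^ i * h ^ (n - i) < g ^ m * h ^ (n - m) := by
  have hpow : g ^ (i - m) < h ^ (i - m) := pow_lt_pow_left₀ hgh hg.le (by omega)
  have hgm : 0 < g ^ m := pow_pos hg m
  have hhn : 0 < h ^ (n - i) := pow_pos (hg.trans hgh) _
  calc g ^ i * h ^ (n - i)
      = g ^ m * (g ^ (i - m) * h ^ (n - i)) := by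
        rw [← mul_assoc, ← pow_add, Nat.add_sub_cancel' hmi.le]
    _ < g ^ m * (h ^ (i - m) * h ^ (n - i)) := by gcongr
    _ = g ^ m * h ^ (n - m) := by rw [← pow_add, show i - m + (n - i) = n - m by omega]

section ArtinSchreier

variable {Γ₀ : Type*} [LinearOrderedCommGroupWithZero Γ₀]

lemma valuation_pow_eq_of_pow_sub_self_eq {R : Type*} [Ring R] (v : Valuation R Γ₀) {n : ℕ}
    (hn : 1 < n) {x a : R} (ha : 1 < v a) (hx : x ^ n - x = a) : v x ^ n = v a := by
  have hvx : 1 < v x := by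
    by_contra! hle
    have hpow : v (x ^ n) ≤ 1 := by simpa only [map_pow] using pow_le_one₀ zero_le hle
    exact ha.not_ge (hx ▸ v.map_sub_le hpow hle)
  rw [← hx, v.map_sub_eq_of_lt_left, map_pow]
  simpa only [map_pow] using lt_self_pow₀ hvx hn

lemma valuation_sum_Icc_eq_of_lt {R : Type*} [Ring R] (v : Valuation R Γ₀) {c : ℕ → R} {x a : R}
    {m k n : ℕ} (hmk : m ≤ k) (hkn : k ≤ n) (hx : 0 < v x) (hxa : v x < v a) (hm : v (c m) = 1)
    (hc : ∀ i ∈ Finset.Ioc m k, v (c i) ≤ 1) :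
    v (∑ i ∈ Finset.Icc m k, c i * x ^ i * a ^ (n - i)) = v x ^ m * v a ^ (n - m) := by
  have hlead : v (c m * x ^ m * a ^ (n - m)) = v x ^ m * v a ^ (n - m) := by
    rw [map_mul, map_mul, hm, one_mul, map_pow, map_pow]
  rw [← hlead]
  refine v.map_sum_eq_of_lt (Finset.left_mem_Icc.2 hmk) fun i hi => ?_
  rw [Finset.sdiff_singleton_eq_erase, Finset.Icc_erase_left] at hi
  obtain ⟨hmi, hik⟩ := Finset.mem_Ioc.1 hi
  calc v (c i * x ^ i * a ^ (n - i))
      = v (c i) * (v x ^ i * v a ^ (n - i)) := by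
        rw [map_mul, map_mul, map_pow, map_pow, mul_assoc]
    _ ≤ v x ^ i * v a ^ (n - i) := mul_le_of_le_one_left' (hc i hi)
    _ < v x ^ m * v a ^ (n - m) :=
        pow_mul_pow_sub_lt_pow_mul_pow_sub hx hxa hmi (hik.trans hkn)
    _ = v (c m * x ^ m * a ^ (n - m)) := hlead.symm

variable {K : Type*} [DivisionRing K] (v : Valuation K Γ₀)

lemma valuation_natCast_div_le_one_of_dvd {k n : ℕ} (hkn : k ∣ n) : v ((n : K) / k) ≤ 1 := by
  by_cases hk : (k : K) = 0
  · simp [hk]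
  · rw [← Nat.cast_div hkn hk]
    exact natCast_mem v.integer _

theorem statement3_general {p : ℕ} (hp : p.Prime) (hpK : (p : K) ≠ 0) {x a : K} {γ : Γ₀}
    (hγ : 1 < γ) (ha : v a = γ ^ p) (hx : x ^ p - x = a) :
    v (-∑ i ∈ Finset.Icc 1 (p - 1), ((p.choose i : K) / (p : K)) * x ^ i * a ^ (p - i)) =
      γ ^ ((p : ℤ) ^ 2 - p + 1) := by
  have hγ0 : 0 < γ := zero_lt_one.trans hγ
  have hvx : v x = γ := by
    have hpow := valuation_pow_eq_of_pow_sub_self_eq v hp.one_lt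
      (ha ▸ one_lt_pow₀ hγ hp.ne_zero) hx
    exact (pow_left_inj₀ zero_le hγ0.le hp.ne_zero).1 (hpow.trans ha)
  have hxa : v x < v a := by
    rw [hvx, ha]
    exact lt_self_pow₀ hγ hp.one_lt
  have hlead : v ((p.choose 1 : K) / p) = 1 := by
    rw [Nat.choose_one_right, div_self hpK, map_one]
  have hcoeff : ∀ i ∈ Finset.Ioc 1 (p - 1), v ((p.choose i : K) / p) ≤ 1 := fun i hi => by
    obtain ⟨hi1, hip⟩ := Finset.mem_Ioc.1 hi
    exact valuation_natCast_div_le_one_of_dvd v (hp.dvd_choose_self (by omega) (by omega))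
  rw [v.map_neg, valuation_sum_Icc_eq_of_lt v (Nat.le_sub_one_of_lt hp.one_lt) (p.sub_le 1)
    (hvx ▸ hγ0) hxa hlead hcoeff, hvx, ha, pow_one, ← pow_mul, ← pow_succ', ← zpow_natCast]
  congr 1
  push_cast [hp.one_le]
  ring

end ArtinSchreier

/-- the valuation of `D₁ = D(x₁,a₁)` in `K₁ = K₀(x₁)` is
`−(p²−p+1)·b₁`. -/
theorem statement3
    (p : ℕ) (hp : p.Prime)
    (K0 K1 : Type*) [Field K0] [Field K1] [CharZero K0] [CharZero K1]
    [Algebra K0 K1] [IsGalois K0 K1] [FiniteDimensional K0 K1]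
    (hdeg : Module.finrank K0 K1 = p)
    (v0 : K0 → ℤ) (v1 : K1 → ℤ)
    (hv0 : IsDiscVal v0) (hv1 : IsDiscVal v1)
    (e0 : ℤ) (he0 : e0 = v0 (p : K0)) (he0pos : 1 ≤ e0)
    (hram : ∀ x : K0, x ≠ 0 → v1 (algebraMap K0 K1 x) = (p : ℤ) * v0 x)
    (a1 : K0) (ha1 : a1 ≠ 0)
    (hwitt : ∀ y : K0, y ^ p - y ≠ a1)
    (hnd : ¬ ((p : ℤ) ∣ v0 a1))
    (hneg : v0 a1 < 0)
    (hbd : -((p : ℤ) * e0) < ((p : ℤ) ^ 2 - 1) * v0 a1)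
    (x1 : K1) (hx1 : x1 ^ p - x1 = algebraMap K0 K1 a1)
    (hgen : Algebra.adjoin K0 {x1} = ⊤)
    (b1 : ℤ) (hb1 : b1 = -v0 a1) :
    (-∑ i ∈ Finset.Icc 1 (p - 1),
        ((p.choose i : K1) / (p : K1)) * x1 ^ i * (algebraMap K0 K1 a1) ^ (p - i)) ≠ 0 ∧
    v1 (-∑ i ∈ Finset.Icc 1 (p - 1),
        ((p.choose i : K1) / (p : K1)) * x1 ^ i * (algebraMap K0 K1 a1) ^ (p - i)) =
      -(((p : ℤ) ^ 2 - p + 1) * b1) := by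
  have ha : hv1.toValuation (algebraMap K0 K1 a1) = WithZero.exp b1 ^ (p : ℤ) :=
    hv1.toValuation_eq_exp_zpow_iff.2 ⟨by simpa using ha1, by rw [hram a1 ha1, hb1]; ring⟩
  exact hv1.toValuation_eq_exp_zpow_iff.1 <| statement3_general hv1.toValuation hp
    (mod_cast hp.ne_zero) (WithZero.exp_lt_exp.2 (by omega : 0 < b1)) (mod_cast ha) hx1
end

section
/- Let C_1 = D(x_1, 1) = (x_1^p + 1 − (x_1+1)^p)/p ∈ K_1. There exists σ_1 ∈ Gal(K_2/K_0) such that (σ_1 − 1)x_1 = 1 + ε and (σ_1 − 1)x_2 = C_1 + δ′, where v_2(ε) = p^2·e_0 − p(p−1)·b_1 and v_2(δ′) > 0. -/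
/-!
Write `℘(x) = x ^ p - x`. The polynomial `D` measures the failure of `℘` to be additive:
`℘(x + y) = ℘(x) + ℘(y) - p D(x, y)`. As `p D(x₁, 1)` is small, `x₁ + 1` is almost a root of
`℘(X) = a₁`; since that polynomial is the product of the `X - σ x₁`, some `σ x₁` is close to
`x₁ + 1`. Comparing `℘` at `x₁` and at `σ x₁ = x₁ + (1 + ε)` gives `℘(1 + ε) = p D(x₁, 1 + ε)`, and
`ε` has the valuation of the left-hand side. In the same way `x₂ + D(x₁, 1)` is almost a root of the
equation `℘(Y) = a₂ + D(σ x₁, a₁)` satisfied by `σ x₂`, because of the cocycle identity for `D` and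
the congruence `D(x, 1) ^ p ≡ D(x ^ p, 1)` modulo `p`.
-/

/-- The polynomial `D(X, Y) = (X ^ p + Y ^ p - (X + Y) ^ p) / p` with integer coefficients, which
gives the second component of a sum of Witt vectors. It is defined by its expansion, so that it
can be evaluated in any ring. -/
def wittD {R : Type*} [CommRing R] (p : ℕ) (x y : R) : R :=
  -∑ i ∈ Finset.Ioo 0 p, x ^ i * y ^ (p - i) * ((p.choose i / p : ℕ) : R)

section WittPolynomial

variable {R : Type*} [CommRing R] {p : ℕ}

lemma map_wittD {S F : Type*} [CommRing S] [FunLike F R S] [RingHomClass F R S] (f : F) (x y : R) :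
    f (wittD p x y) = wittD p (f x) (f y) := by
  simp [wittD]

lemma natCast_mul_wittD (hp : p.Prime) (x y : R) :
    (p : R) * wittD p x y = x ^ p + y ^ p - (x + y) ^ p := by
  rw [wittD, add_pow_prime_eq' hp]
  ring

lemma wittD_eq_div {K : Type*} [Field K] [CharZero K] (hp : p.Prime) (x y : K) :
    wittD p x y = (x ^ p + y ^ p - (x + y) ^ p) / p := by
  rw [eq_div_iff (Nat.cast_ne_zero.mpr hp.ne_zero), mul_comm, natCast_mul_wittD hp]

lemma add_pow_sub_add (hp : p.Prime) (x y : R) :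
    (x + y) ^ p - (x + y) = (x ^ p - x) + (y ^ p - y) - p * wittD p x y := by
  rw [natCast_mul_wittD hp]
  ring

/-- The cocycle identity for `D`, rearranged using the symmetry of `D`. -/
lemma wittD_add_wittD_right_comm (hp : p.Prime) (x y z : R) :
    wittD p x y + wittD p (x + y) z = wittD p x z + wittD p (x + z) y := by
  have huniv (X Y Z : MvPolynomial (Fin 3) ℤ) :
      wittD p X Y + wittD p (X + Y) Z = wittD p X Z + wittD p (X + Z) Y := by
    apply mul_left_cancel₀ (Nat.cast_ne_zero.mpr hp.ne_zero : (p : MvPolynomial (Fin 3) ℤ) ≠ 0)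
    simp only [mul_add, natCast_mul_wittD hp]
    rw [add_right_comm X Z Y]
    ring
  simpa [map_wittD] using congrArg (MvPolynomial.aeval ![x, y, z])
    (huniv (MvPolynomial.X 0) (MvPolynomial.X 1) (MvPolynomial.X 2))

end WittPolynomial

section Valuation

variable {R Γ₀ : Type*} [CommRing R] [LinearOrderedCommGroupWithZero Γ₀] (v : Valuation R Γ₀)
  {p : ℕ}

lemma valuation_natCast_le_one (n : ℕ) : v n ≤ 1 :=
  natCast_mem v.integer n

lemma valuation_intCast_le_one (n : ℤ) : v n ≤ 1 :=
  intCast_mem v.integer n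

lemma valuation_intCast_pow_sub_self_le (hp : p.Prime) (n : ℤ) : v ((n : R) ^ p - n) ≤ v p := by
  have := Fact.mk hp
  obtain ⟨c, hc⟩ : (p : ℤ) ∣ n ^ p - n := by
    simp [← ZMod.intCast_zmod_eq_zero_iff_dvd]
  have hcast : (n : R) ^ p - n = p * c := by
    exact_mod_cast congrArg (Int.cast : ℤ → R) hc
  rw [hcast, map_mul]
  exact mul_le_of_le_one_right' (valuation_intCast_le_one v c)

variable {v} {x y z : R} {γ δ : Γ₀}

lemma valuation_pow_sub_pow_le (hx : v x ≤ γ) (hy : v y ≤ γ) (n : ℕ) :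
    v (x ^ n - y ^ n) ≤ v (x - y) * γ ^ (n - 1) := by
  rw [← (Commute.all x y).mul_geom_sum₂, map_mul]
  gcongr
  refine v.map_sum_le fun i hi => ?_
  have hexp : n - 1 = i + (n - 1 - i) := by grind
  rw [map_mul, map_pow, map_pow, hexp, pow_add, Nat.add_sub_cancel_left]
  gcongr

/-- Since `δ ≤ γ`, the monomial `x ^ (p - 1) * y` of `D(x, y)` has the largest bound. -/
lemma valuation_wittD_le (hδγ : δ ≤ γ) (hx : v x ≤ γ) (hy : v y ≤ δ) :
    v (wittD p x y) ≤ γ ^ (p - 1) * δ := by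
  rw [wittD, v.map_neg]
  refine v.map_sum_le fun i hi => ?_
  have hip : i < p := (Finset.mem_Ioo.mp hi).2
  calc v (x ^ i * y ^ (p - i) * ((p.choose i / p : ℕ) : R))
      ≤ γ ^ i * δ ^ (p - i) * 1 := by
        simp only [map_mul, map_pow]
        gcongr
        exact valuation_natCast_le_one v _
    _ = γ ^ i * (δ ^ (p - 1 - i) * δ) := by
        rw [mul_one, ← pow_succ, show p - 1 - i + 1 = p - i by omega]
    _ ≤ γ ^ i * (γ ^ (p - 1 - i) * δ) := by gcongr
    _ = γ ^ (p - 1) * δ := by rw [← mul_assoc, ← pow_add, Nat.add_sub_cancel' (by omega)]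

lemma valuation_wittD_sub_wittD_le (hx : v x ≤ γ) (hy : v y ≤ γ) (hz : v z ≤ γ) :
    v (wittD p x z - wittD p y z) ≤ v (x - y) * γ ^ (p - 1) := by
  rw [wittD, wittD, neg_sub_neg, v.map_sub_swap, ← Finset.sum_sub_distrib]
  refine v.map_sum_le fun i hi => ?_
  obtain ⟨hi0, hip⟩ := Finset.mem_Ioo.mp hi
  rw [← sub_mul, ← sub_mul]
  calc v ((x ^ i - y ^ i) * z ^ (p - i) * ((p.choose i / p : ℕ) : R))
      ≤ v (x - y) * γ ^ (i - 1) * γ ^ (p - i) * 1 := by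
        simp only [map_mul, map_pow]
        gcongr
        · exact valuation_pow_sub_pow_le hx hy i
        · exact valuation_natCast_le_one v _
    _ = v (x - y) * γ ^ (p - 1) := by
        rw [mul_one, mul_assoc, ← pow_add, show i - 1 + (p - i) = p - 1 by omega]

lemma valuation_sum_pow_sub_sum_pow_le (hp : p.Prime) {ι : Type*} (s : Finset ι) {f : ι → R}
    (hf : ∀ i ∈ s, v (f i) ≤ γ) :
    v ((∑ i ∈ s, f i) ^ p - ∑ i ∈ s, f i ^ p) ≤ v p * γ ^ p := by
  classical
  induction s using Finset.induction_on with
  | empty => simp [hp.ne_zero]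
  | insert a s ha ih =>
    rw [Finset.forall_mem_insert] at hf
    have hsplit : (f a + ∑ i ∈ s, f i) ^ p - (f a ^ p + ∑ i ∈ s, f i ^ p) =
        ((∑ i ∈ s, f i) ^ p - ∑ i ∈ s, f i ^ p) - p * wittD p (f a) (∑ i ∈ s, f i) := by
      rw [natCast_mul_wittD hp]
      ring
    rw [Finset.sum_insert ha, Finset.sum_insert ha, hsplit]
    refine v.map_sub_le (ih hf.2) ?_
    rw [map_mul, ← pow_sub_one_mul hp.ne_zero γ]
    gcongr
    exact valuation_wittD_le le_rfl hf.1 (v.map_sum_le hf.2)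

/-- Frobenius fixes the coefficients of `D(X, 1)` modulo `p`, so it commutes with `D(·, 1)` up to
multiples of `p`. -/
lemma valuation_wittD_one_pow_sub_le (hp : p.Prime) (hγ : 1 ≤ γ) (hx : v x ≤ γ) :
    v (wittD p x 1 ^ p - wittD p (x ^ p) 1) ≤ v p * (γ ^ (p - 1)) ^ p := by
  let k (i : ℕ) : ℤ := -(p.choose i / p : ℕ)
  have hD (y : R) : wittD p y 1 = ∑ i ∈ Finset.Ioo 0 p, k i * y ^ i := by
    rw [wittD, ← Finset.sum_neg_distrib]
    refine Finset.sum_congr rfl fun i _ => ?_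
    simp only [k, Int.cast_neg, Int.cast_natCast]
    ring
  have hxpow : ∀ i ∈ Finset.Ioo 0 p, v (x ^ i) ≤ γ ^ (p - 1) := fun i hi => by
    rw [map_pow]
    exact (pow_le_pow_left' hx i).trans (pow_le_pow_right₀ hγ (by grind))
  have hsum : v ((∑ i ∈ Finset.Ioo 0 p, k i * x ^ i) ^ p - ∑ i ∈ Finset.Ioo 0 p, (k i * x ^ i) ^ p)
      ≤ v p * (γ ^ (p - 1)) ^ p :=
    valuation_sum_pow_sub_sum_pow_le hp _ fun i hi => by
      rw [map_mul]
      exact mul_le_of_le_one_of_le (valuation_intCast_le_one v _) (hxpow i hi)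
  have hcoeff : v (∑ i ∈ Finset.Ioo 0 p, ((k i * x ^ i) ^ p - k i * (x ^ p) ^ i))
      ≤ v p * (γ ^ (p - 1)) ^ p := by
    refine v.map_sum_le fun i hi => ?_
    rw [mul_pow, pow_right_comm x p i, ← sub_mul, map_mul, map_pow]
    exact mul_le_mul' (valuation_intCast_pow_sub_self_le v hp _) (pow_le_pow_left' (hxpow i hi) p)
  rw [hD, hD, ← sub_add_sub_cancel _ (∑ i ∈ Finset.Ioo 0 p, (k i * x ^ i) ^ p),
    ← Finset.sum_sub_distrib]
  exact v.map_add_le hsum hcoeff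

lemma valuation_pow_sub_self (hp : 1 < p) (hx : 1 < v x) : v (x ^ p - x) = v x ^ p := by
  rw [v.map_sub_eq_of_lt_left, map_pow]
  rw [map_pow]
  exact lt_self_pow₀ hx hp

lemma one_lt_valuation_of_pow_sub_self (h : 1 < v (x ^ p - x)) : 1 < v x := by
  contrapose! h
  exact v.map_sub_le (by rw [map_pow]; exact pow_le_one' h p) h

lemma valuation_wittD_of_one_lt (hp : p.Prime) (hx : 1 < v x) (hy : v y = 1) :
    v (wittD p x y) = v x ^ (p - 1) := by
  classical
  have hp2 := hp.two_le
  let f (i : ℕ) : R := x ^ i * y ^ (p - i) * ((p.choose i / p : ℕ) : R)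
  have hmem : p - 1 ∈ Finset.Ioo 0 p := Finset.mem_Ioo.mpr ⟨by omega, by omega⟩
  have hlead : v (f (p - 1)) = v x ^ (p - 1) := by
    have hchoose : p.choose (p - 1) / p = 1 := by
      rw [Nat.choose_symm hp.one_le, Nat.choose_one_right, Nat.div_self hp.pos]
    simp [f, hchoose, hy]
  rw [wittD, v.map_neg, ← hlead]
  refine v.map_sum_eq_of_lt (f := f) hmem fun i hi => ?_
  have hip : i < p - 1 := by grind
  calc v (f i) ≤ v x ^ i := by
        simp only [f, map_mul, map_pow, hy, one_pow, mul_one]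
        exact mul_le_of_le_one_right' (valuation_natCast_le_one v _)
    _ < v x ^ (p - 1) := pow_lt_pow_right₀ hx hip
    _ = v (f (p - 1)) := hlead.symm

lemma valuation_one_add_pow_sub_one_add (hp : p.Prime) (hvp : v p < 1) (hx : v x < 1) :
    v ((1 + x) ^ p - (1 + x)) = v x := by
  have hexpand : (1 + x) ^ p - (1 + x) = (x ^ p - p * wittD p 1 x) - x := by
    rw [add_pow_sub_add hp]
    ring
  have hD : v (p * wittD p 1 x) ≤ v p * v x := by
    rw [map_mul]
    gcongr
    simpa using valuation_wittD_le hx.le v.map_one.le le_rfl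
  rw [hexpand]
  rcases eq_or_ne (v x) 0 with hx0 | hx0
  · rw [v.map_sub_of_right_eq_zero hx0, v.map_sub_of_left_eq_zero (by simp [hx0, hp.ne_zero])]
    simpa [hx0] using hD
  · have hpos : 0 < v x := zero_lt_iff.mpr hx0
    have hpow : v (x ^ p) < v x := by
      rw [map_pow]
      exact pow_lt_self_of_lt_one₀ hpos hx hp.one_lt
    exact v.map_sub_eq_of_lt_right
      (v.map_sub_lt hpow (hD.trans_lt (mul_lt_of_lt_one_left hpos hvp)))

lemma valuation_sub_add_one_of_pow_sub_self_eq (hp : p.Prime) (hvp : v p < 1) (hx : 1 < v x)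
    (hxy : v (y - (x + 1)) < 1) (h : y ^ p - y = x ^ p - x) :
    v (y - (x + 1)) = v p * v x ^ (p - 1) := by
  obtain ⟨ε, rfl⟩ : ∃ ε, y = x + (1 + ε) := ⟨y - x - 1, by ring⟩
  rw [← add_assoc, add_sub_cancel_left] at hxy ⊢
  have hsmall : (1 + ε) ^ p - (1 + ε) = p * wittD p x (1 + ε) := by
    linear_combination h - add_pow_sub_add hp x (1 + ε)
  rw [← valuation_one_add_pow_sub_one_add hp hvp hxy, hsmall, map_mul,
    valuation_wittD_of_one_lt hp hx (v.map_one_add_of_lt hxy)]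

end Valuation

section Tower

variable {R Γ₀ : Type*} [CommRing R] [LinearOrderedCommGroupWithZero Γ₀]
  {v : Valuation R Γ₀} {p : ℕ} {x x' y a b : R} {γ : Γ₀}

/-- By the cocycle identity for `D`, the shift `x ↦ x + 1` changes `D(x, a)` by
`D(x ^ p, 1) - D(x, 1)`, which is `℘(D(x, 1))` up to multiples of `p`. -/
lemma pow_sub_self_add_wittD_one_sub (hp : p.Prime) (hx : x ^ p - x = a)
    (hy : y ^ p - y = b + wittD p x a) :
    (y + wittD p x 1) ^ p - (y + wittD p x 1) - (b + wittD p x' a) =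
      (wittD p x 1 ^ p - wittD p (x ^ p) 1) - p * wittD p y (wittD p x 1)
        - (wittD p x' a - wittD p (x + 1) a) := by
  have hcocycle := wittD_add_wittD_right_comm hp x a 1
  rw [show x + a = x ^ p by rw [← hx]; ring] at hcocycle
  linear_combination add_pow_sub_add hp y (wittD p x 1) + hy + hcocycle

/-- The value group need not contain a `p`-th root of `v b`, hence the `p`-th powers. -/
lemma valuation_pow_le_max_of_pow_sub_self_eq (hp : p.Prime) (hx : x ^ p - x = a)
    (hy : y ^ p - y = b + wittD p x a) (hvx : 1 < v x) :
    v y ^ p ≤ max (v b) ((v x ^ p) ^ p) := by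
  rcases le_or_gt (v y) (v x ^ p) with hle | hlt
  · exact le_max_of_le_right (pow_le_pow_left' hle p)
  · have ha : v a = v x ^ p := by rw [← hx, valuation_pow_sub_self hp.one_lt hvx]
    have hD : v (wittD p x a) ≤ (v x ^ p) ^ p := by
      rw [← pow_sub_one_mul hp.ne_zero (v x ^ p)]
      exact valuation_wittD_le le_rfl (le_self_pow₀ hvx.le hp.ne_zero) ha.le
    rw [← valuation_pow_sub_self hp.one_lt ((one_le_pow₀ hvx.le).trans_lt hlt), hy]
    exact (v.map_add _ _).trans (max_le_max_left _ hD)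

lemma valuation_pow_sub_self_add_wittD_one_sub_lt_one (hp : p.Prime) (hx : x ^ p - x = a)
    (hy : y ^ p - y = b + wittD p x a) (hvx : 1 < v x) (hxγ : v x ^ p ≤ γ) (hyγ : v y ≤ γ)
    (hγ : v p * (v x * γ) ^ (p - 1) < 1) (hx' : v (x' - (x + 1)) ≤ v p * v x ^ (p - 1)) :
    v ((y + wittD p x 1) ^ p - (y + wittD p x 1) - (b + wittD p x' a)) < 1 := by
  have hpow_le (n : ℕ) (hn : n ≤ p) : v x ^ n ≤ γ := (pow_le_pow_right₀ hvx.le hn).trans hxγ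
  have hvxγ : v x ≤ γ := by simpa using hpow_le 1 hp.one_le
  have hγ1 : 1 ≤ γ := hvx.le.trans hvxγ
  have hvxγ1 : v (x + 1) ≤ γ := v.map_add_le hvxγ (by simpa using hγ1)
  have hpx : v p * v x ^ (p - 1) < 1 := by
    refine lt_of_le_of_lt ?_ hγ
    gcongr
    exact le_mul_of_one_le_right' hγ1
  have hvx' : v x' ≤ γ := by
    rw [← sub_add_cancel x' (x + 1)]
    exact v.map_add_le (hx'.trans (hpx.le.trans hγ1)) hvxγ1
  have ha : v a ≤ γ := by
    rw [← hx]
    exact v.map_sub_le (by simpa using hxγ) hvxγ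
  have hC : v (wittD p x 1) = v x ^ (p - 1) := valuation_wittD_of_one_lt hp hvx v.map_one
  suffices hle : v ((y + wittD p x 1) ^ p - (y + wittD p x 1) - (b + wittD p x' a)) ≤
      v p * (v x * γ) ^ (p - 1) from hle.trans_lt hγ
  rw [pow_sub_self_add_wittD_one_sub hp hx hy, mul_pow]
  refine v.map_sub_le (v.map_sub_le ?_ ?_) ?_
  · refine (valuation_wittD_one_pow_sub_le hp hvx.le le_rfl).trans ?_
    rw [← pow_sub_one_mul hp.ne_zero (v x ^ (p - 1)), mul_comm (_ ^ (p - 1))]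
    gcongr
    exact hpow_le _ (Nat.sub_le p 1)
  · rw [map_mul, mul_comm (v x ^ _)]
    gcongr
    exact valuation_wittD_le (hpow_le _ (Nat.sub_le p 1)) hyγ hC.le
  · rw [← mul_assoc]
    refine (valuation_wittD_sub_wittD_le hvx' hvxγ1 ha).trans ?_
    gcongr

lemma valuation_natCast_mul_mul_pow_lt_one (hp : p.Prime) (hx : x ^ p - x = a)
    (hy : y ^ p - y = b + wittD p x a) (hvx : 1 < v x) (hpa : v p ^ p * v a ^ (p ^ 2 - 1) < 1)
    (hpb : v p ^ p * (v a * v b) ^ (p - 1) < 1) :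
    v p * (v x * max (v x ^ p) (v y)) ^ (p - 1) < 1 := by
  have ha : v x ^ p = v a := by rw [← hx, valuation_pow_sub_self hp.one_lt hvx]
  rw [← pow_lt_one_iff hp.ne_zero, mul_pow, pow_right_comm, mul_pow (v x), ha]
  have hmax : max (v a) (v y) ^ p ≤ max (v b) (v a ^ p) := by
    rcases max_choice (v a) (v y) with h | h <;> rw [h]
    · exact le_max_right _ _
    · exact ha ▸ valuation_pow_le_max_of_pow_sub_self_eq hp hx hy hvx
  refine (mul_le_mul_right (pow_le_pow_left' (mul_le_mul_right hmax _) _) _).trans_lt ?_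
  rcases max_choice (v b) (v a ^ p) with h | h <;> rw [h]
  · exact hpb
  · rwa [← pow_succ', ← pow_mul, ← Nat.sq_sub_sq p 1]

end Tower

section Conjugates

open Polynomial IntermediateField

variable {K L Γ₀ : Type*} [Field K] [Field L] [Algebra K L] {x y z : L}

section Valuation

variable [Normal K L] [LinearOrderedCommGroupWithZero Γ₀] {v : Valuation L Γ₀}

/-- The value `v (f z)` of the minimal polynomial `f` of `x` is the product of the distances of `z`
to the conjugates of `x`. -/
lemma exists_algEquiv_valuation_sub_lt_one (h : v (aeval z (minpoly K x)) < 1) :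
    ∃ σ : L ≃ₐ[K] L, v (z - σ x) < 1 := by
  have hx : IsIntegral K x := Normal.isIntegral inferInstance x
  rw [(Normal.splits inferInstance x).aeval_eq_prod_aroots_of_monic (minpoly.monic hx),
    map_multiset_prod, Multiset.map_map] at h
  obtain ⟨r, hr, hvr⟩ : ∃ r ∈ (minpoly K x).aroots L, v (z - r) < 1 := by
    contrapose! h
    exact Multiset.one_le_prod_map h
  obtain ⟨σ, rfl⟩ := minpoly.exists_algEquiv_of_root' hx.isAlgebraic (mem_aroots.mp hr).2
  exact ⟨σ, hvr⟩

lemma exists_algEquiv_apply_eq_and_valuation_sub_lt_one (σ : L ≃ₐ[K] L)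
    (h : v (σ (aeval (σ.symm z) (minpoly K⟮x⟯ y))) < 1) :
    ∃ τ : L ≃ₐ[K] L, τ x = σ x ∧ v (z - τ y) < 1 := by
  obtain ⟨ρ, hρ⟩ := exists_algEquiv_valuation_sub_lt_one (v := v.comap (σ : L →+* L)) h
  refine ⟨(ρ.restrictScalars K).trans σ, ?_, by simpa using hρ⟩
  exact congrArg σ (ρ.commutes (AdjoinSimple.gen K x))

end Valuation

lemma minpoly_eq_of_natDegree_mul_le_finrank [FiniteDimensional K L] {f : K[X]} {g : K⟮x⟯[X]}
    (hf : f.Monic) (hfx : aeval x f = 0) (hg : g.Monic) (hgy : aeval y g = 0)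
    (hgen : Algebra.adjoin K {x, y} = ⊤) (hdeg : f.natDegree * g.natDegree ≤ Module.finrank K L) :
    minpoly K x = f ∧ minpoly K⟮x⟯ y = g := by
  have hx : IsIntegral K x := .of_finite K x
  have hy : IsIntegral K⟮x⟯ y := .of_finite K⟮x⟯ y
  have htop : K⟮x⟯⟮y⟯ = ⊤ := by
    apply restrictScalars_injective K
    rw [adjoin_simple_adjoin_simple, adjoin_eq_top_of_algebra K _ hgen, restrictScalars_top]
  have hfinrank : (minpoly K x).natDegree * (minpoly K⟮x⟯ y).natDegree = Module.finrank K L := by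
    rw [← adjoin.finrank hx, ← adjoin.finrank hy, htop, finrank_top',
      Module.finrank_mul_finrank]
  have hdvdf : minpoly K x ∣ f := minpoly.dvd K x hfx
  have hdvdg : minpoly K⟮x⟯ y ∣ g := minpoly.dvd K⟮x⟯ y hgy
  have hlef := natDegree_le_of_dvd hdvdf hf.ne_zero
  have hleg := natDegree_le_of_dvd hdvdg hg.ne_zero
  have hposf := minpoly.natDegree_pos hx
  have hposg := minpoly.natDegree_pos hy
  rw [← hfinrank] at hdeg
  refine ⟨(eq_of_monic_of_dvd_of_natDegree_le (minpoly.monic hx) hf hdvdf ?_).symm,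
    (eq_of_monic_of_dvd_of_natDegree_le (minpoly.monic hy) hg hdvdg ?_).symm⟩
  · exact Nat.le_of_mul_le_mul_right ((Nat.mul_le_mul_left _ hleg).trans hdeg) hposg
  · exact Nat.le_of_mul_le_mul_left ((Nat.mul_le_mul_right _ hlef).trans hdeg) hposf

end Conjugates

section ArtinSchreier

open Polynomial

variable {R : Type*} [CommRing R] [Nontrivial R] {p : ℕ}

lemma natDegree_X_pow_sub_X_sub_C (hp : 1 < p) (c : R) : (X ^ p - X - C c).natDegree = p := by
  rw [sub_sub, natDegree_sub_eq_left_of_natDegree_lt, natDegree_X_pow]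
  rwa [natDegree_X_pow, natDegree_X_add_C]

lemma monic_X_pow_sub_X_sub_C (hp : 1 < p) (c : R) : (X ^ p - X - C c).Monic := by
  rw [sub_sub]
  exact monic_X_pow_sub (by rw [degree_X_add_C]; exact_mod_cast hp)

end ArtinSchreier

section WittTower

open Polynomial IntermediateField

variable {K L Γ₀ : Type*} [Field K] [Field L] [Algebra K L] {p : ℕ} {a b : K} {x y : L}

lemma minpoly_eq_of_pow_sub_self_eq (hp : 1 < p) (hdeg : Module.finrank K L = p ^ 2)
    (hx : x ^ p - x = algebraMap K L a) {c : K⟮x⟯} (hy : y ^ p - y = algebraMap K⟮x⟯ L c)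
    (hgen : Algebra.adjoin K {x, y} = ⊤) :
    minpoly K x = X ^ p - X - C a ∧ minpoly K⟮x⟯ y = X ^ p - X - C c := by
  have : FiniteDimensional K L := Module.finite_of_finrank_pos (by rw [hdeg]; positivity)
  have hfx : aeval x (X ^ p - X - C a) = 0 := by simp [hx]
  have hgy : aeval y (X ^ p - X - C c) = 0 := by simp [hy]
  refine minpoly_eq_of_natDegree_mul_le_finrank (monic_X_pow_sub_X_sub_C hp a) hfx
    (monic_X_pow_sub_X_sub_C hp c) hgy hgen ?_
  rw [natDegree_X_pow_sub_X_sub_C hp, natDegree_X_pow_sub_X_sub_C hp, hdeg, sq]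

variable [LinearOrderedCommGroupWithZero Γ₀] {v : Valuation L Γ₀}

lemma exists_algEquiv_valuation_sub_add_one [Normal K L] (hp : p.Prime)
    (hmin : minpoly K x = X ^ p - X - C a) (hvx : 1 < v x) (hvp : v p * v x ^ (p - 1) < 1) :
    ∃ σ : L ≃ₐ[K] L, v (σ x - (x + 1)) = v p * v x ^ (p - 1) := by
  have hx : x ^ p - x = algebraMap K L a := by
    simpa [hmin, sub_eq_zero] using minpoly.aeval K x
  have hC : v (wittD p x 1) = v x ^ (p - 1) := valuation_wittD_of_one_lt hp hvx v.map_one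
  have hroot : aeval (x + 1) (minpoly K x) = -(p * wittD p x 1) := by
    simp only [hmin, map_sub, map_pow, aeval_X, aeval_C]
    linear_combination add_pow_sub_add hp x 1 + hx
  obtain ⟨σ, hσ⟩ : ∃ σ : L ≃ₐ[K] L, v (x + 1 - σ x) < 1 := by
    apply exists_algEquiv_valuation_sub_lt_one
    rwa [hroot, v.map_neg, map_mul, hC]
  refine ⟨σ, valuation_sub_add_one_of_pow_sub_self_eq hp ?_ hvx (by rwa [v.map_sub_swap]) ?_⟩
  · exact (le_mul_of_one_le_right' (one_le_pow₀ hvx.le)).trans_lt hvp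
  · rw [hx, ← σ.commutes a, ← hx, map_sub, map_pow]

theorem exists_algEquiv_valuation_sub_of_pow_sub_self_eq [Normal K L] (hp : p.Prime)
    (hdeg : Module.finrank K L = p ^ 2) (hx : x ^ p - x = algebraMap K L a)
    (hy : y ^ p - y = algebraMap K L b + wittD p x (algebraMap K L a))
    (hgen : Algebra.adjoin K {x, y} = ⊤) (hva : 1 < v (algebraMap K L a))
    (hpa : v p ^ p * v (algebraMap K L a) ^ (p ^ 2 - 1) < 1)
    (hpb : v p ^ p * (v (algebraMap K L a) * v (algebraMap K L b)) ^ (p - 1) < 1) :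
    ∃ σ : L ≃ₐ[K] L, v (σ x - (x + 1)) ^ p = v p ^ p * v (algebraMap K L a) ^ (p - 1) ∧
      v (σ y - (y + wittD p x 1)) < 1 := by
  let c : K⟮x⟯ := algebraMap K K⟮x⟯ b + wittD p (AdjoinSimple.gen K x) (algebraMap K K⟮x⟯ a)
  have hc : algebraMap K⟮x⟯ L c = algebraMap K L b + wittD p x (algebraMap K L a) := by
    simp only [c, map_add, map_wittD, ← IsScalarTower.algebraMap_apply,
      AdjoinSimple.algebraMap_gen]
  obtain ⟨hminx, hminy⟩ := minpoly_eq_of_pow_sub_self_eq hp.one_lt hdeg hx (hy.trans hc.symm) hgen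
  have hvx : 1 < v x := one_lt_valuation_of_pow_sub_self (by rwa [hx])
  have hpxy : v p * (v x * max (v x ^ p) (v y)) ^ (p - 1) < 1 :=
    valuation_natCast_mul_mul_pow_lt_one hp hx hy hvx hpa hpb
  have hvp : v p * v x ^ (p - 1) < 1 := by
    refine lt_of_le_of_lt ?_ hpxy
    gcongr
    exact le_mul_of_one_le_right' (le_max_of_le_left (one_le_pow₀ hvx.le))
  obtain ⟨σ, hσ⟩ := exists_algEquiv_valuation_sub_add_one hp hminx hvx hvp
  have hroot : σ (aeval (σ.symm (y + wittD p x 1)) (minpoly K⟮x⟯ y)) =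
      (y + wittD p x 1) ^ p - (y + wittD p x 1)
        - (algebraMap K L b + wittD p (σ x) (algebraMap K L a)) := by
    simp only [hminy, map_sub, map_pow, aeval_X, aeval_C, hc, map_add σ (algebraMap K L b),
      map_wittD, AlgEquiv.commutes, AlgEquiv.apply_symm_apply]
  obtain ⟨τ, hτx, hτy⟩ : ∃ τ : L ≃ₐ[K] L, τ x = σ x ∧ v (y + wittD p x 1 - τ y) < 1 := by
    apply exists_algEquiv_apply_eq_and_valuation_sub_lt_one
    rw [hroot]
    exact valuation_pow_sub_self_add_wittD_one_sub_lt_one hp hx hy hvx (le_max_left _ _)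
      (le_max_right _ _) hpxy hσ.le
  exact ⟨τ, by rw [hτx, hσ, mul_pow, pow_right_comm, ← hx,
    valuation_pow_sub_self hp.one_lt hvx], by rwa [v.map_sub_swap]⟩

end WittTower

section DiscreteValuation

open WithZero

variable {K : Type*} [Field K] {v : K → ℤ} {x y : K}

protected lemma IsDiscVal.map_pow (hv : IsDiscVal v) (hx : x ≠ 0) (n : ℕ) :
    v (x ^ n) = n * v x := by
  induction n with
  | zero => simp [hv.map_one]
  | succ n ih =>
    rw [pow_succ, hv.map_mul _ _ (pow_ne_zero n hx) hx, ih]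
    push_cast
    ring

open Classical in
/-- The multiplicative valuation attached to a normalized discrete valuation: `exp (-v x)` for
`x ≠ 0`, and `0` at `0`. -/
noncomputable def IsDiscVal.valuation (hv : IsDiscVal v) : Valuation K ℤᵐ⁰ where
  toFun x := if x = 0 then 0 else exp (-v x)
  map_zero' := if_pos rfl
  map_one' := by simp [hv.map_one]
  map_mul' x y := by
    rcases eq_or_ne x 0 with rfl | hx
    · simp
    rcases eq_or_ne y 0 with rfl | hy
    · simp
    simp only [mul_eq_zero, hx, hy, or_self, if_false, hv.map_mul x y hx hy, neg_add, exp_add]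
  map_add_le_max' x y := by
    rcases eq_or_ne x 0 with rfl | hx
    · simp
    rcases eq_or_ne y 0 with rfl | hy
    · simp
    rcases eq_or_ne (x + y) 0 with hxy | hxy
    · simp [hxy]
    have h := hv.min_le_add x y hx hy hxy
    simp only [hx, hy, hxy, if_false, le_max_iff, exp_le_exp]
    omega

namespace IsDiscVal

variable (hv : IsDiscVal v)

lemma valuation_apply_of_ne_zero (hx : x ≠ 0) : hv.valuation x = exp (-v x) :=
  if_neg hx

lemma valuation_lt_one_iff : hv.valuation x < 1 ↔ x = 0 ∨ 0 < v x := by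
  rcases eq_or_ne x 0 with rfl | hx
  · simp
  · rw [hv.valuation_apply_of_ne_zero hx, ← exp_zero, exp_lt_exp]
    simp [hx]

lemma valuation_pow_mul_pow (hx : x ≠ 0) (hy : y ≠ 0) (m n : ℕ) :
    hv.valuation x ^ m * hv.valuation y ^ n = exp (-(m * v x + n * v y)) := by
  rw [hv.valuation_apply_of_ne_zero hx, hv.valuation_apply_of_ne_zero hy, ← exp_nsmul, ← exp_nsmul,
    ← exp_add, nsmul_eq_mul, nsmul_eq_mul, mul_neg, mul_neg, neg_add]

lemma valuation_pow_mul_pow_lt_one_iff (hx : x ≠ 0) (hy : y ≠ 0) (m n : ℕ) :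
    hv.valuation x ^ m * hv.valuation y ^ n < 1 ↔ 0 < m * v x + n * v y := by
  rw [hv.valuation_pow_mul_pow hx hy, ← exp_zero, exp_lt_exp, neg_lt_zero]

lemma valuation_pow_eq_exp_iff {k : ℕ} (hk : k ≠ 0) {n : ℤ} :
    hv.valuation x ^ k = exp n ↔ x ≠ 0 ∧ k * v x = -n := by
  rcases eq_or_ne x 0 with rfl | hx
  · simp [hk, exp_ne_zero.symm]
  · rw [hv.valuation_apply_of_ne_zero hx, ← exp_nsmul, exp_inj, nsmul_eq_mul, mul_neg]
    simp [hx, neg_eq_iff_eq_neg]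

end IsDiscVal

end DiscreteValuation

theorem statement6_general {K L : Type*} [Field K] [Field L] [CharZero L] [Algebra K L]
    [Normal K L] {p : ℕ} (hp : p.Prime) (hdeg : Module.finrank K L = p ^ 2)
    {v : L → ℤ} (hv : IsDiscVal v) {a b : K} (ha0 : a ≠ 0) (ha : v (algebraMap K L a) < 0)
    (hpa : -(p * v p) < ((p : ℤ) ^ 2 - 1) * v (algebraMap K L a))
    (hpb : b ≠ 0 → -(p * v p) < (p - 1) * (v (algebraMap K L a) + v (algebraMap K L b)))
    {x y : L} (hx : x ^ p - x = algebraMap K L a)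
    (hy : y ^ p - y = algebraMap K L b +
      (x ^ p + algebraMap K L a ^ p - (x + algebraMap K L a) ^ p) / p)
    (hgen : Algebra.adjoin K {x, y} = ⊤) :
    ∃ σ : L ≃ₐ[K] L, ∃ ε δ : L,
      σ x = x + 1 + ε ∧ σ y = y + (x ^ p + 1 - (x + 1) ^ p) / p + δ ∧
      ε ≠ 0 ∧ p * v ε = p * v p + (p - 1) * v (algebraMap K L a) ∧ (δ = 0 ∨ 0 < v δ) := by
  have hp1 : ((p - 1 : ℕ) : ℤ) = p - 1 := Nat.cast_pred hp.pos
  have hp0 : (p : L) ≠ 0 := Nat.cast_ne_zero.mpr hp.ne_zero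
  have hA0 : algebraMap K L a ≠ 0 := (map_ne_zero _).mpr ha0
  have hA1 : 1 < hv.valuation (algebraMap K L a) := by
    rwa [hv.valuation_apply_of_ne_zero hA0, ← WithZero.exp_zero, WithZero.exp_lt_exp, neg_pos]
  have hpA : hv.valuation p ^ p * hv.valuation (algebraMap K L a) ^ (p ^ 2 - 1) < 1 := by
    rw [hv.valuation_pow_mul_pow_lt_one_iff hp0 hA0, Nat.cast_pred (pow_pos hp.pos 2), Nat.cast_pow]
    linarith
  have hpB : hv.valuation p ^ p *
      (hv.valuation (algebraMap K L a) * hv.valuation (algebraMap K L b)) ^ (p - 1) < 1 := by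
    rcases eq_or_ne b 0 with rfl | hb0
    · simp [Nat.sub_eq_zero_iff_le, hp.one_lt.not_ge]
    have hB0 : algebraMap K L b ≠ 0 := (map_ne_zero _).mpr hb0
    rw [← map_mul, hv.valuation_pow_mul_pow_lt_one_iff hp0 (mul_ne_zero hA0 hB0), hp1,
      hv.map_mul _ _ hA0 hB0]
    linarith [hpb hb0]
  rw [← wittD_eq_div hp] at hy
  obtain ⟨σ, hσx, hσy⟩ :=
    exists_algEquiv_valuation_sub_of_pow_sub_self_eq hp hdeg hx hy hgen hA1 hpA hpB
  rw [hv.valuation_pow_mul_pow hp0 hA0, hv.valuation_pow_eq_exp_iff hp.ne_zero, neg_neg, hp1] at hσx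
  refine ⟨σ, σ x - (x + 1), σ y - (y + wittD p x 1), (add_sub_cancel _ _).symm, ?_, hσx.1, hσx.2,
    hv.valuation_lt_one_iff.mp hσy⟩
  rw [wittD_eq_div hp, one_pow, add_sub_cancel]

/-- Proposition 3.4: there is `σ₁ ∈ Gal(K₂/K₀)` with
`(σ₁−1)x₁ = 1 + ε` and `(σ₁−1)x₂ = C₁ + δ'`, where
`C₁ = (x₁^p + 1 − (x₁+1)^p)/p`, `v₂(ε) = p²e₀ − p(p−1)b₁` and `v₂(δ') > 0`. -/
theorem statement6
    (p : ℕ) (hp : p.Prime)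
    (K0 K2 : Type*) [Field K0] [Field K2] [CharZero K0] [CharZero K2]
    [Algebra K0 K2] [IsGalois K0 K2] [FiniteDimensional K0 K2]
    (hdeg : Module.finrank K0 K2 = p ^ 2)
    (hcyc : IsCyclic (K2 ≃ₐ[K0] K2))
    (v0 : K0 → ℤ) (v2 : K2 → ℤ)
    (hv0 : IsDiscVal v0) (hv2 : IsDiscVal v2)
    (e0 : ℤ) (he0 : e0 = v0 (p : K0)) (he0pos : 1 ≤ e0)
    (hram : ∀ x : K0, x ≠ 0 → v2 (algebraMap K0 K2 x) = (p : ℤ) ^ 2 * v0 x)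
    (a1 μ a2 : K0) (ha1 : a1 ≠ 0) (hμ0 : μ ≠ 0)
    (hwitt : ∀ y : K0, y ^ p - y ≠ a1)
    (hnd : ¬ ((p : ℤ) ∣ v0 a1))
    (hneg : v0 a1 < 0)
    (hbd : -((p : ℤ) * e0) < ((p : ℤ) ^ 2 - 1) * v0 a1)
    (m : ℤ) (hm : m = -v0 μ) (hmpos : 0 < m)
    (hmu1 : (p : ℤ) ^ 2 * (p - 1) * m - (2 * p * (p - 1) + 1) * v0 a1 < (p : ℤ) ^ 2 * e0)
    (hmu2 : -(((p : ℤ) ^ 2 - 1) * v0 a1) < (p : ℤ) ^ 2 * m)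
    (ha2 : a2 = μ ^ p * a1)
    (x1 x2 : K2)
    (hx1 : x1 ^ p - x1 = algebraMap K0 K2 a1)
    (hx2 : x2 ^ p - x2 = algebraMap K0 K2 a2 +
      (x1 ^ p + (algebraMap K0 K2 a1) ^ p - (x1 + algebraMap K0 K2 a1) ^ p) / (p : K2))
    (hgen : Algebra.adjoin K0 {x1, x2} = ⊤)
    (b1 b2 : ℤ) (hb1 : b1 = -v0 a1) (hb2 : b2 = (p : ℤ) ^ 2 * m + b1) :
    ∃ σ1 : K2 ≃ₐ[K0] K2, ∃ ε δ' : K2,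
      σ1 x1 = x1 + 1 + ε ∧
      σ1 x2 = x2 + (x1 ^ p + 1 - (x1 + 1) ^ p) / (p : K2) + δ' ∧
      ε ≠ 0 ∧ v2 ε = (p : ℤ) ^ 2 * e0 - p * (p - 1) * b1 ∧
      (δ' = 0 ∨ 0 < v2 δ') := by
  have hp0 : (0 : ℤ) < p := mod_cast hp.pos
  have hvp : v2 p = p ^ 2 * v0 p := by
    simpa using hram p (Nat.cast_ne_zero.mpr hp.ne_zero)
  have hva1 : v2 (algebraMap K0 K2 a1) = p ^ 2 * v0 a1 := hram a1 ha1
  have hva2 : v2 (algebraMap K0 K2 a2) = p ^ 2 * (p * v0 μ + v0 a1) := by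
    rw [ha2, hram _ (mul_ne_zero (pow_ne_zero p hμ0) ha1), hv0.map_mul _ _ (pow_ne_zero p hμ0) ha1,
      hv0.map_pow hμ0]
  subst he0 hm hb1
  have hpa1 : -(p * v2 p) < ((p : ℤ) ^ 2 - 1) * v2 (algebraMap K0 K2 a1) := by
    rw [hvp, hva1]
    linarith [mul_lt_mul_of_pos_left hbd (pow_pos hp0 2)]
  have hpa2 : -(p * v2 p) <
      (p - 1) * (v2 (algebraMap K0 K2 a1) + v2 (algebraMap K0 K2 a2)) := by
    rw [hvp, hva1, hva2]
    linarith [mul_lt_mul_of_pos_left hmu1 hp0, mul_neg_of_pos_of_neg hp0 hneg]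
  obtain ⟨σ, ε, δ, hσx1, hσx2, hε0, hε, hδ⟩ := statement6_general hp hdeg hv2 ha1
    (by rw [hva1]; exact mul_neg_of_pos_of_neg (pow_pos hp0 2) hneg) hpa1 (fun _ => hpa2)
    hx1 hx2 hgen
  refine ⟨σ, ε, δ, hσx1, hσx2, hε0, mul_left_cancel₀ hp0.ne' ?_, hδ⟩
  rw [hε, hvp, hva1]
  ring
end
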